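/- Let Z₁ and Z₂ be sets satisfying the graphical adjustment criterion for A,Y,L,N in G with Z₁ ⊆ V(H^1) and Z₂ ⊆ V(H^1), and suppose Z₁ ⊴_{H^1} Z₂ (i.e., Y ⊥_{H^1} Z₂\Z₁ | Z₁ and A ⊥_{H^1} Z₁\Z₂ | Z₂). Then Y and Z₂\Z₁ are d-separated by {A} ∪ Z₁ in G, and A and Z₁\Z₂ are d-separated by Z₂ in G. -/

import Mathlib

open Relation Set

namespace CausalGraph

variable {V : Type*} [Fintype V] [DecidableEq V]

/-- `p` is a path in the undirected sense from `u` to `v` along adjacency `Adj`: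
a nonempty list of pairwise distinct vertices, consecutive ones adjacent,
starting at `u` and ending at `v`. -/
def IsPath (Adj : V → V → Prop) (u v : V) (p : List V) : Prop :=
  List.Chain' Adj p ∧ p.head? = some u ∧ p.getLast? = some v ∧ p.Nodup

/-- Ancestors of `S` in the digraph `D` (every vertex is an ancestor of itself). -/
def anc (D : V → V → Prop) (S : Set V) : Set V :=
  {u | ∃ v ∈ S, Relation.ReflTransGen D u v}

/-- Descendants of `S` in the digraph `D` (every vertex is a descendant of itself). -/
def desc (D : V → V → Prop) (S : Set V) : Set V :=
  {u | ∃ v ∈ S, Relation.ReflTransGen D v u}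

/-- Parents of vertices of `S` in the digraph `D`. -/
def parents (D : V → V → Prop) (S : Set V) : Set V :=
  {u | ∃ v ∈ S, D u v}

/-- The digraph `D` is acyclic. -/
def Acyclic (D : V → V → Prop) : Prop :=
  ∀ u v, D u v → ¬ Relation.ReflTransGen D v u

/-- Vertices other than `A` lying on a directed path from `A` to `Y`. -/
def cn (D : V → V → Prop) (A Y : V) : Set V :=
  {v | v ≠ A ∧ Relation.ReflTransGen D A v ∧ Relation.ReflTransGen D v Y}

/-- The forbidden set. -/
def forb (D : V → V → Prop) (A Y : V) : Set V :=
  desc D (cn D A Y) ∪ {A}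

/-- Proper back-door graph: delete every edge from `A` into `cn D A Y`. -/
def pbd (D : V → V → Prop) (A Y : V) : V → V → Prop :=
  fun u v => D u v ∧ ¬(u = A ∧ v ∈ cn D A Y)

/-- `y` is an interior vertex of the list `p` with neighbours `x` and `z` on the path. -/
def InteriorAt (p : List V) (x y z : V) : Prop :=
  ∃ s t : List V, p = s ++ x :: y :: z :: t

/-- The path `p` is blocked by `Z` in the digraph `D`: some interior non-collider
lies in `Z`, or some interior collider has no descendant in `Z`. -/
def Blocked (D : V → V → Prop) (Z : Set V) (p : List V) : Prop :=
  (∃ x y z, InteriorAt p x y z ∧ ¬(D x y ∧ D z y) ∧ y ∈ Z) ∨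
  (∃ x y z, InteriorAt p x y z ∧ (D x y ∧ D z y) ∧ ∀ d ∈ desc D {y}, d ∉ Z)

/-- d-separation of `S` and `T` given `Z` in the digraph `D`. -/
def DSep (D : V → V → Prop) (S T Z : Set V) : Prop :=
  ∀ s ∈ S, ∀ t ∈ T, ∀ p : List V,
    IsPath (fun a b => D a b ∨ D b a) s t p → Blocked D Z p

/-- Moral graph of the subgraph of the digraph `D` induced on `Vs`. -/
def moral (D : V → V → Prop) (Vs : Set V) : SimpleGraph V :=
  SimpleGraph.fromRel (fun u v =>
    u ∈ Vs ∧ v ∈ Vs ∧ (D u v ∨ D v u ∨ ∃ w ∈ Vs, D u w ∧ D v w))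

/-- Separation in an undirected graph: every path from `S` to `T` meets `W`. -/
def USep (H : SimpleGraph V) (S T W : Set V) : Prop :=
  ∀ s ∈ S, ∀ t ∈ T, ∀ p : List V, IsPath H.Adj s t p → ∃ z ∈ W, z ∈ p

/-- `Z` is an `A`–`Y` cut in an undirected graph `H` with vertex set `Vs`. -/
def IsCut (Vs : Set V) (H : SimpleGraph V) (A Y : V) (Z : Set V) : Prop :=
  Z ⊆ Vs ∧ Z ∩ {A, Y} = ∅ ∧ ∀ p : List V, IsPath H.Adj A Y p → ∃ z ∈ Z, z ∈ p

def MinimalCut (Vs : Set V) (H : SimpleGraph V) (A Y : V) (Z : Set V) : Prop :=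
  IsCut Vs H A Y Z ∧ ∀ Z' ⊂ Z, ¬ IsCut Vs H A Y Z'

def MinimumCut (Vs : Set V) (H : SimpleGraph V) (A Y : V) (Z : Set V) : Prop :=
  IsCut Vs H A Y Z ∧ ∀ Z', IsCut Vs H A Y Z' → Z.ncard ≤ Z'.ncard

/-- Connected component of `y` in `H` restricted to the complement of `U`:
vertices reachable from `y` by paths avoiding `U`. -/
def cc (H : SimpleGraph V) (U : Set V) (y : V) : Set V :=
  {w | ∃ p : List V, IsPath H.Adj y w p ∧ ∀ x ∈ p, x ∉ U}

/-- Boundary of `S` in `H`: vertices outside `S` adjacent to some vertex of `S`. -/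
def bdry (H : SimpleGraph V) (S : Set V) : Set V :=
  {v | v ∉ S ∧ ∃ u ∈ S, H.Adj v u}

/-- The partial order `Z₁ ⊴_H Z₂` between `A`–`Y` cuts. -/
def TLE (H : SimpleGraph V) (A Y : V) (Z₁ Z₂ : Set V) : Prop :=
  USep H {Y} (Z₂ \ Z₁) Z₁ ∧ USep H {A} (Z₁ \ Z₂) Z₂

/-- Ancestors of `{A, Y} ∪ L`. -/
def ancAYL (D : V → V → Prop) (A Y : V) (L : Set V) : Set V :=
  anc D ({A, Y} ∪ L)

/-- The moral graph `H⁰` of the proper back-door graph induced on `an_G({A,Y} ∪ L)`. -/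
def H0 (D : V → V → Prop) (A Y : V) (L : Set V) : SimpleGraph V :=
  moral (pbd D A Y) (ancAYL D A Y L)

/-- The set of vertices removed from `H⁰` when constructing `H¹`. -/
def Ignore (D : V → V → Prop) (A Y : V) (L N : Set V) : Set V :=
  (ancAYL D A Y L \ {A, Y}) ∩ ((Set.univ \ N) ∪ forb D A Y)

/-- Vertex set of `H¹`. -/
def H1verts (D : V → V → Prop) (A Y : V) (L N : Set V) : Set V :=
  ancAYL D A Y L \ Ignore D A Y L N

/-- The non-parametric adjustment efficiency graph `H¹`: delete the vertices of
`Ignore`, join two remaining vertices if they are joined in `H⁰` by a path all of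
whose intermediate vertices are in `Ignore`, and join `A` and `Y` to every vertex
of `L`. -/
def H1 (D : V → V → Prop) (A Y : V) (L N : Set V) : SimpleGraph V :=
  SimpleGraph.fromRel (fun u v =>
    u ∈ H1verts D A Y L N ∧ v ∈ H1verts D A Y L N ∧
      ((∃ p : List V, IsPath (H0 D A Y L).Adj u v p ∧
          ∀ x ∈ p, x ≠ u → x ≠ v → x ∈ Ignore D A Y L N) ∨
        (u = A ∧ v ∈ L) ∨ (u = Y ∧ v ∈ L)))

/-- The graphical adjustment criterion for `A, Y, L, N` in the DAG `D`. -/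
def GAC (D : V → V → Prop) (A Y : V) (L N Z : Set V) : Prop :=
  DSep (pbd D A Y) {A} {Y} Z ∧ Z ∩ forb D A Y = ∅ ∧ L ⊆ Z ∧ Z ⊆ N

def MinimalGAC (D : V → V → Prop) (A Y : V) (L N Z : Set V) : Prop :=
  GAC D A Y L N Z ∧ ∀ Z' ⊂ Z, ¬ GAC D A Y L N Z'

def MinimumGAC (D : V → V → Prop) (A Y : V) (L N Z : Set V) : Prop :=
  GAC D A Y L N Z ∧ ∀ Z', GAC D A Y L N Z' → Z.ncard ≤ Z'.ncard

/-- Graphical admissibility of the pair `(L, N)`. -/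
def Admissible (D : V → V → Prop) (A Y : V) (L N : Set V) : Prop :=
  ∃ Z, GAC D A Y L N Z

end CausalGraph

namespace CausalGraph

/-
The conditional independences in `G` are reduced to separations in `H¹` along
`G` → moral graph of an ancestral set → `H⁰` → `H¹`. Leaving `H⁰` for `H¹` only marginalises the
ignored vertices, and edges of `H¹` beyond these make separation harder. What needs an argument is
passing from `G` to its proper back-door graph, which lacks the edges from `A` into causal nodes.
For the first claim these edges are harmless because `A` is conditioned on. For the second, it
suffices to moralise the ancestors of `A`, `Z₁` and `Z₂`. No causal node is among them, since `G`
is acyclic and `Z₁` and `Z₂` avoid the forbidden set.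
-/

section Ancestors

variable {V : Type*} {D : V → V → Prop} {S T : Set V} {u v : V}

lemma subset_anc : S ⊆ anc D S :=
  fun v hv => ⟨v, hv, .refl⟩

lemma mem_anc_of_edge (huv : D u v) (hv : v ∈ anc D S) : u ∈ anc D S := by
  obtain ⟨w, hw, hvw⟩ := hv
  exact ⟨w, hw, .head huv hvw⟩

lemma anc_subset_anc_of_subset_anc (h : S ⊆ anc D T) : anc D S ⊆ anc D T := by
  rintro u ⟨v, hv, huv⟩
  obtain ⟨w, hw, hvw⟩ := h hv
  exact ⟨w, hw, huv.trans hvw⟩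

lemma notMem_desc_of_mem_anc (hST : Disjoint S (desc D T)) (hv : v ∈ anc D S) : v ∉ T := by
  obtain ⟨w, hw, hvw⟩ := hv
  exact fun hvT => disjoint_left.1 hST hw ⟨v, hvT, hvw⟩

lemma Acyclic.asymm (hD : Acyclic D) : Std.Asymm D :=
  ⟨fun u v huv hvu => hD u v huv (.single hvu)⟩

lemma Acyclic.notMem_desc_cn (hD : Acyclic D) (A Y : V) : A ∉ desc D (cn D A Y) := by
  rintro ⟨c, ⟨hcA, hAc, -⟩, hc⟩
  obtain rfl | ⟨b, hAb, hbc⟩ := hAc.cases_head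
  · exact hcA rfl
  · exact hD A b hAb (hbc.trans hc)

end Ancestors

section Paths

variable {V : Type*} {r : V → V → Prop} {D : V → V → Prop} {Z : Set V} {u v x y z : V}
  {p : List V}

lemma isPath_iff :
    IsPath r u v p ↔ p.IsChain r ∧ p.head? = some u ∧ p.getLast? = some v ∧ p.Nodup :=
  .rfl

lemma isPath_singleton : IsPath r u v [x] ↔ x = u ∧ x = v := by
  simp [isPath_iff]

lemma isPath_cons_cons :
    IsPath r u v (x :: y :: p) ↔
      x = u ∧ r x y ∧ x ∉ y :: p ∧ IsPath r y v (y :: p) := by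
  simp only [isPath_iff, List.isChain_cons_cons, List.head?_cons, Option.some.injEq,
    List.getLast?_cons_cons, List.nodup_cons (a := x), true_and]
  tauto

lemma Blocked.cons (h : Blocked D Z p) (a : V) : Blocked D Z (a :: p) := by
  have cons_interiorAt {x y z : V} : InteriorAt p x y z → InteriorAt (a :: p) x y z := by
    rintro ⟨s, t, rfl⟩
    exact ⟨a :: s, t, rfl⟩
  obtain ⟨x, y, z, hi, hy⟩ | ⟨x, y, z, hi, hy⟩ := h
  · exact .inl ⟨x, y, z, cons_interiorAt hi, hy⟩
  · exact .inr ⟨x, y, z, cons_interiorAt hi, hy⟩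

lemma notMem_of_not_blocked (h : ¬ Blocked D Z (x :: y :: z :: p)) (hy : ¬ (D x y ∧ D z y)) :
    y ∉ Z :=
  fun hyZ => h (.inl ⟨x, y, z, ⟨[], p, rfl⟩, hy, hyZ⟩)

lemma mem_anc_of_not_blocked (h : ¬ Blocked D Z (x :: y :: z :: p)) (hy : D x y ∧ D z y) :
    y ∈ anc D Z := by
  by_contra hyZ
  refine h (.inr ⟨x, y, z, ⟨[], p, rfl⟩, hy, ?_⟩)
  rintro d ⟨_, rfl, hd⟩ hdZ
  exact hyZ ⟨d, hdZ, hd⟩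

end Paths

section Separation

variable {V : Type*} {H K : SimpleGraph V} {I S T W : Set V} {u v : V}

lemma exists_walk_support_eq {p : List V} (hp : IsPath H.Adj u v p) :
    ∃ q : H.Walk u v, q.support = p := by
  obtain ⟨hchain, hhead, hlast, -⟩ := hp
  have hne : p ≠ [] := by
    rintro rfl
    cases hhead
  obtain rfl : p.head hne = u := List.head_of_head?_eq_some hhead
  obtain rfl : p.getLast hne = v := List.getLast_of_getLast?_eq_some hlast
  exact ⟨.ofSupport p hne hchain, SimpleGraph.Walk.support_ofSupport hne hchain⟩

lemma exists_isPath_subset_support (p : H.Walk u v) :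
    ∃ q, IsPath H.Adj u v q ∧ q ⊆ p.support := by
  classical
  refine ⟨p.bypass.support, ⟨p.bypass.isChain_adj_support, ?_, ?_, p.bypass_isPath.support_nodup⟩,
    p.support_bypass_subset_support⟩
  · rw [List.head?_eq_some_head p.bypass.support_ne_nil, p.bypass.head_support]
  · rw [List.getLast?_eq_some_getLast p.bypass.support_ne_nil, p.bypass.getLast_support]

lemma usep_iff_forall_walk :
    USep H S T W ↔ ∀ s ∈ S, ∀ t ∈ T, ∀ p : H.Walk s t, ∃ z ∈ W, z ∈ p.support := by
  refine forall₄_congr fun s _ t _ => ⟨fun h p => ?_, fun h p hp => ?_⟩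
  · obtain ⟨q, hq, hqp⟩ := exists_isPath_subset_support p
    exact (h q hq).imp fun z hz => ⟨hz.1, hqp hz.2⟩
  · obtain ⟨q, rfl⟩ := exists_walk_support_eq hp
    exact h q

lemma USep.of_adj_imp (h : USep K S T W)
    (hHK : ∀ u v, u ∉ W → v ∉ W → H.Adj u v → K.Adj u v) : USep H S T W := by
  rintro s hs t ht p ⟨hchain, hp⟩
  by_contra! hpW
  have hKchain : List.IsChain K.Adj p := hchain.imp_of_mem_imp fun u v hu hv =>
    hHK u v (fun huW => hpW u huW hu) (fun hvW => hpW v hvW hv)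
  obtain ⟨z, hzW, hzp⟩ := h s hs t ht p ⟨hKchain, hp⟩
  exact hpW z hzW hzp

lemma USep.mono_right {W' : Set V} (h : USep H S T W) (hW : W ⊆ W') : USep H S T W' :=
  fun s hs t ht p hp => (h s hs t ht p hp).imp fun _ hz => ⟨hW hz.1, hz.2⟩

/-- The marginal of the undirected graph `H` over the set `I`: the vertices of `I` are isolated,
and two other vertices are adjacent if `H` joins them by a walk with interior in `I`. This is the
deletion-and-joining step in the construction of `H¹` from `H⁰`. -/
def marginal (H : SimpleGraph V) (I : Set V) : SimpleGraph V where
  Adj u v := u ≠ v ∧ u ∉ I ∧ v ∉ I ∧ ∃ p : H.Walk u v, ∀ x ∈ p.support, x ≠ u → x ≠ v → x ∈ I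
  symm := ⟨by
    rintro u v ⟨huv, hu, hv, p, hp⟩
    refine ⟨huv.symm, hv, hu, p.reverse, fun x hx hxv hxu => hp x ?_ hxu hxv⟩
    simpa only [SimpleGraph.Walk.support_reverse, List.mem_reverse] using hx⟩
  loopless := ⟨fun _ h => h.1 rfl⟩

-- Each walk splits at its first vertex outside `I`, which makes the induction go through for
-- walks starting in `I` as well.
lemma exists_walk_walk_marginal (p : H.Walk u v) (hv : v ∉ I) :
    ∃ w ∉ I, (u ∉ I → w = u) ∧
      (∃ q : H.Walk u w, ∀ x ∈ q.support, x ≠ w → x ∈ I) ∧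
      ∃ q : (marginal H I).Walk w v, q.support ⊆ p.support := by
  induction p with
  | nil => exact ⟨_, hv, fun _ => rfl, ⟨.nil, by simp⟩, .nil, by simp⟩
  | @cons u b v hub p ih =>
    obtain ⟨w, hw, -, ⟨q, hq⟩, q', hq'⟩ := ih hv
    by_cases hu : u ∈ I
    · refine ⟨w, hw, fun h => absurd hu h, ⟨.cons hub q, ?_⟩, q', ?_⟩
      · simpa [hu] using hq
      · exact List.subset_cons_of_subset _ hq'
    · refine ⟨u, hu, fun _ => rfl, ⟨.nil, by simp⟩, ?_⟩
      by_cases huw : u = w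
      · subst huw
        exact ⟨q', List.subset_cons_of_subset _ hq'⟩
      · have hadj : (marginal H I).Adj u w := by
          refine ⟨huw, hu, hw, .cons hub q, fun x hx hxu hxw => hq x ?_ hxw⟩
          simpa [hxu] using hx
        exact ⟨.cons hadj q', List.cons_subset_cons _ hq'⟩

lemma USep.of_marginal (hS : Disjoint S I) (hT : Disjoint T I) (h : USep (marginal H I) S T W) :
    USep H S T W := by
  rw [usep_iff_forall_walk] at h ⊢
  intro s hs t ht p
  obtain ⟨w, -, hws, -, q, hqp⟩ := exists_walk_walk_marginal p (disjoint_left.1 hT ht)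
  obtain rfl := hws (disjoint_left.1 hS hs)
  exact (h w hs t ht q).imp fun z hz => ⟨hz.1, hqp hz.2⟩

end Separation

section Moralization

variable {V : Type*} {D D' : V → V → Prop} {S T W Z U U' : Set V} {t u v x y : V} {l : List V}

lemma moral_adj :
    (moral D U).Adj u v ↔
      u ≠ v ∧ u ∈ U ∧ v ∈ U ∧ (D u v ∨ D v u ∨ ∃ w ∈ U, D u w ∧ D v w) := by
  simp only [moral, SimpleGraph.fromRel_adj]
  grind

lemma moral_adj_of_imp (hU : U ⊆ U') (hu : ∀ w ∈ U, D u w → D' u w)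
    (hv : ∀ w ∈ U, D v w → D' v w) (h : (moral D U).Adj u v) : (moral D' U').Adj u v := by
  rw [moral_adj] at h ⊢
  grind

-- The open path keeps running forwards from the edge `x → y` until it ends or meets a collider.
lemma mem_anc_of_edge_of_not_blocked (hp : IsPath (SymmGen D) x t (x :: y :: l))
    (hopen : ¬ Blocked D Z (x :: y :: l)) (hxy : D x y) : y ∈ anc D (insert t Z) := by
  induction l generalizing x y with
  | nil =>
    obtain ⟨-, -, -, hp⟩ := isPath_cons_cons.1 hp
    exact subset_anc (.inl (isPath_singleton.1 hp).2)
  | cons z l ih =>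
    obtain ⟨-, -, -, hp⟩ := isPath_cons_cons.1 hp
    obtain ⟨-, hyz | hzy, -, -⟩ := isPath_cons_cons.1 hp
    · exact mem_anc_of_edge hyz (ih hp (fun h => hopen (h.cons x)) hyz)
    · exact anc_subset_anc_of_subset_anc ((subset_insert t Z).trans subset_anc)
        (mem_anc_of_not_blocked hopen ⟨hxy, hzy⟩)

lemma mem_anc_of_not_blocked_of_mem_anc (hZ : Z ⊆ anc D W) (ht : t ∈ anc D W)
    (hx : x ∈ anc D W) (hp : IsPath (SymmGen D) x t (x :: y :: l))
    (hopen : ¬ Blocked D Z (x :: y :: l)) : y ∈ anc D W := by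
  obtain ⟨-, hxy | hyx, -, -⟩ := isPath_cons_cons.1 hp
  · exact anc_subset_anc_of_subset_anc (insert_subset ht hZ)
      (mem_anc_of_edge_of_not_blocked hp hopen hxy)
  · exact mem_anc_of_edge hyx hx

-- At a collider in `Z` the moral edge between its two parents skips it. By asymmetry the second
-- parent is not a collider of the path, so it avoids `Z`.
lemma exists_moral_adj_of_not_blocked [Std.Asymm D] (hZ : Z ⊆ anc D W) (ht : t ∈ anc D W)
    (htZ : t ∉ Z) (hx : x ∈ anc D W) (hp : IsPath (SymmGen D) x t (x :: y :: l))
    (hopen : ¬ Blocked D Z (x :: y :: l)) :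
    ∃ z l', l'.length ≤ l.length ∧ (moral D (anc D W)).Adj x z ∧ z ∈ anc D W ∧ z ∉ Z ∧
      IsPath (SymmGen D) z t (z :: l') ∧ ¬ Blocked D Z (z :: l') := by
  have hy : y ∈ anc D W := mem_anc_of_not_blocked_of_mem_anc hZ ht hx hp hopen
  obtain ⟨-, hxy, hxl, hyp⟩ := isPath_cons_cons.1 hp
  have hyopen : ¬ Blocked D Z (y :: l) := fun h => hopen (h.cons x)
  by_cases hyZ : y ∉ Z
  · have hadj : (moral D (anc D W)).Adj x y :=
      moral_adj.2 ⟨fun h => hxl (h ▸ List.mem_cons_self), hx, hy, or_assoc.1 (.inl hxy)⟩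
    exact ⟨y, l, le_rfl, hadj, hy, hyZ, hyp, hyopen⟩
  match l with
  | [] => exact absurd ((isPath_singleton.1 hyp).2 ▸ htZ) hyZ
  | z :: l =>
    have hcol : D x y ∧ D z y := by
      by_contra hcol
      exact hyZ (notMem_of_not_blocked hopen hcol)
    obtain ⟨-, -, -, hzp⟩ := isPath_cons_cons.1 hyp
    have hz : z ∈ anc D W := mem_anc_of_edge hcol.2 hy
    have hzZ : z ∉ Z := by
      match l with
      | [] => exact (isPath_singleton.1 hzp).2 ▸ htZ
      | w :: l => exact notMem_of_not_blocked hyopen fun h => Std.Asymm.asymm _ _ h.1 hcol.2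
    have hadj : (moral D (anc D W)).Adj x z :=
      moral_adj.2 ⟨fun h => hxl (by simp [h]), hx, hz, .inr (.inr ⟨y, hy, hcol⟩)⟩
    exact ⟨z, l, Nat.le_succ _, hadj, hz, hzZ, hzp, fun h => hyopen (h.cons y)⟩

lemma exists_moral_walk_of_not_blocked [Std.Asymm D] (hZ : Z ⊆ anc D W) (ht : t ∈ anc D W)
    (htZ : t ∉ Z) (x : V) (l : List V) (hp : IsPath (SymmGen D) x t (x :: l))
    (hopen : ¬ Blocked D Z (x :: l)) (hx : x ∈ anc D W) (hxZ : x ∉ Z) :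
    ∃ q : (moral D (anc D W)).Walk x t, ∀ v ∈ q.support, v ∉ Z := by
  match l with
  | [] =>
    obtain rfl := (isPath_singleton.1 hp).2
    exact ⟨.nil, by simpa using hxZ⟩
  | y :: l =>
    obtain ⟨z, l', hl', hadj, hz, hzZ, hzp, hzopen⟩ :=
      exists_moral_adj_of_not_blocked hZ ht htZ hx hp hopen
    have : l'.length < (y :: l).length := Nat.lt_succ_of_le hl'
    obtain ⟨q, hq⟩ := exists_moral_walk_of_not_blocked hZ ht htZ z l' hzp hzopen hz hzZ
    exact ⟨.cons hadj q, by simpa [hxZ] using hq⟩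
termination_by l.length

theorem dsep_of_usep_moral [Std.Asymm D] (hS : S ⊆ anc D W) (hT : T ⊆ anc D W)
    (hZ : Z ⊆ anc D W) (hSZ : Disjoint S Z) (hTZ : Disjoint T Z)
    (h : USep (moral D (anc D W)) S T Z) : DSep D S T Z := by
  intro s hs t ht p hp
  by_contra hopen
  obtain ⟨l, rfl⟩ : ∃ l, p = s :: l := ⟨p.tail, (List.cons_head?_tail hp.2.1).symm⟩
  obtain ⟨q, hq⟩ := exists_moral_walk_of_not_blocked hZ (hT ht) (disjoint_left.1 hTZ ht) s l hp
    hopen (hS hs) (disjoint_left.1 hSZ hs)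
  obtain ⟨z, hzZ, hzq⟩ := usep_iff_forall_walk.1 h s hs t ht q
  exact hq z hzq hzZ

end Moralization

section Adjustment

variable {V : Type*} {D : V → V → Prop} {A Y : V} {L N S T Z : Set V} {u v : V}

lemma pbd_of_ne (hu : u ≠ A) (huv : D u v) : pbd D A Y u v :=
  ⟨huv, fun h => hu h.1⟩

lemma pbd_of_notMem_cn (hv : v ∉ cn D A Y) (huv : D u v) : pbd D A Y u v :=
  ⟨huv, fun h => hv h.2⟩

lemma pair_subset_H1verts : {A, Y} ⊆ H1verts D A Y L N :=
  fun _ hv => ⟨subset_anc (.inl hv), fun h => h.1.2 hv⟩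

lemma H1verts_subset_ancAYL : H1verts D A Y L N ⊆ ancAYL D A Y L :=
  sdiff_subset

lemma disjoint_Ignore_of_subset_H1verts (hS : S ⊆ H1verts D A Y L N) :
    Disjoint S (Ignore D A Y L N) :=
  disjoint_left.2 fun _ hv => (hS hv).2

lemma disjoint_forb_of_subset_H1verts (hZ : Z ⊆ H1verts D A Y L N)
    (hAYZ : Disjoint Z {A, Y}) : Disjoint Z (forb D A Y) :=
  disjoint_left.2 fun _ hv hf =>
    (hZ hv).2 ⟨⟨(hZ hv).1, disjoint_left.1 hAYZ hv⟩, .inr hf⟩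

lemma marginal_H0_le_H1 : marginal (H0 D A Y L) (Ignore D A Y L N) ≤ H1 D A Y L N := by
  have mem_H1verts {u v : V} (huv : u ≠ v) (hu : u ∉ Ignore D A Y L N)
      (p : (H0 D A Y L).Walk u v) : u ∈ H1verts D A Y L N := by
    cases p with
    | nil => exact absurd rfl huv
    | cons hadj _ => exact ⟨(moral_adj.1 hadj).2.1, hu⟩
  rintro u v ⟨huv, hu, hv, p, hp⟩
  obtain ⟨q, hq, hqp⟩ := exists_isPath_subset_support p
  exact (SimpleGraph.fromRel_adj _ _ _).2 ⟨huv, .inl ⟨mem_H1verts huv hu p,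
    mem_H1verts huv.symm hv p.reverse, .inl ⟨q, hq, fun x hx => hp x (hqp hx)⟩⟩⟩

lemma USep.H0_of_H1 (hS : S ⊆ H1verts D A Y L N) (hT : T ⊆ H1verts D A Y L N)
    (h : USep (H1 D A Y L N) S T Z) : USep (H0 D A Y L) S T Z :=
  .of_marginal (disjoint_Ignore_of_subset_H1verts hS) (disjoint_Ignore_of_subset_H1verts hT)
    (h.of_adj_imp fun _ _ _ _ hadj => marginal_H0_le_H1 hadj)

theorem dsep_union_of_usep_H1 [Std.Asymm D] (hS : S ⊆ H1verts D A Y L N)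
    (hT : T ⊆ H1verts D A Y L N) (hZ : Z ⊆ H1verts D A Y L N)
    (hSZ : Disjoint S ({A} ∪ Z)) (hTZ : Disjoint T ({A} ∪ Z))
    (h : USep (H1 D A Y L N) S T Z) : DSep D S T ({A} ∪ Z) := by
  have hAZ : {A} ∪ Z ⊆ H1verts D A Y L N :=
    union_subset (singleton_subset_iff.2 (pair_subset_H1verts (.inl rfl))) hZ
  refine dsep_of_usep_moral (W := {A, Y} ∪ L) (hS.trans H1verts_subset_ancAYL)
    (hT.trans H1verts_subset_ancAYL) (hAZ.trans H1verts_subset_ancAYL) hSZ hTZ ?_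
  refine ((h.H0_of_H1 hS hT).mono_right subset_union_right).of_adj_imp fun u v hu hv => ?_
  have huA : u ≠ A := fun h => hu (.inl h)
  have hvA : v ≠ A := fun h => hv (.inl h)
  exact moral_adj_of_imp subset_rfl (fun _ _ => pbd_of_ne huA) (fun _ _ => pbd_of_ne hvA)

theorem dsep_of_usep_H1 [Std.Asymm D] (hS : S ⊆ H1verts D A Y L N)
    (hT : T ⊆ H1verts D A Y L N) (hZ : Z ⊆ H1verts D A Y L N)
    (hSZ : Disjoint S Z) (hTZ : Disjoint T Z)
    (hcn : Disjoint (S ∪ T ∪ Z) (desc D (cn D A Y)))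
    (h : USep (H1 D A Y L N) S T Z) : DSep D S T Z := by
  have hanc : anc D (S ∪ T ∪ Z) ⊆ ancAYL D A Y L :=
    anc_subset_anc_of_subset_anc
      ((union_subset (union_subset hS hT) hZ).trans H1verts_subset_ancAYL)
  have hpbd (u w : V) (hw : w ∈ anc D (S ∪ T ∪ Z)) : D u w → pbd D A Y u w :=
    pbd_of_notMem_cn (notMem_desc_of_mem_anc hcn hw)
  refine dsep_of_usep_moral (W := S ∪ T ∪ Z) (fun _ hv => subset_anc (.inl (.inl hv)))
    (fun _ hv => subset_anc (.inl (.inr hv))) (fun _ hv => subset_anc (.inr hv)) hSZ hTZ ?_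
  exact (h.H0_of_H1 hS hT).of_adj_imp fun u v _ _ => moral_adj_of_imp hanc (hpbd u) (hpbd v)

lemma GAC.disjoint_pair (hZ : GAC D A Y L N Z) (hAY : A ≠ Y) (hAancY : ReflTransGen D A Y) :
    Disjoint Z {A, Y} := by
  have hforb : {A, Y} ⊆ forb D A Y :=
    insert_subset (.inr rfl)
      (singleton_subset_iff.2 (.inl ⟨Y, ⟨hAY.symm, hAancY, .refl⟩, .refl⟩))
  exact (disjoint_iff_inter_eq_empty.2 hZ.2.1).mono_right hforb

end Adjustment

theorem stmt9_general {V : Type*} {D : V → V → Prop} (hacy : Acyclic D) {A Y : V} (hAY : A ≠ Y)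
    {L N Z₁ Z₂ : Set V} (hZ₁v : Z₁ ⊆ H1verts D A Y L N) (hZ₂v : Z₂ ⊆ H1verts D A Y L N)
    (hZ₁ : Disjoint Z₁ {A, Y}) (hZ₂ : Disjoint Z₂ {A, Y})
    (hord : TLE (H1 D A Y L N) A Y Z₁ Z₂) :
    DSep D {Y} (Z₂ \ Z₁) ({A} ∪ Z₁) ∧ DSep D {A} (Z₁ \ Z₂) Z₂ := by
  have := hacy.asymm
  obtain ⟨hYsep, hAsep⟩ := hord
  have hAv : {A} ⊆ H1verts D A Y L N := singleton_subset_iff.2 (pair_subset_H1verts (.inl rfl))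
  have hYv : {Y} ⊆ H1verts D A Y L N := singleton_subset_iff.2 (pair_subset_H1verts (.inr rfl))
  have hAZ₂ : A ∉ Z₂ := disjoint_right.1 hZ₂ (.inl rfl)
  have hYZ₁ : Y ∉ Z₁ := disjoint_right.1 hZ₁ (.inr rfl)
  constructor
  · have hYAZ₁ : Disjoint {Y} ({A} ∪ Z₁) :=
      disjoint_singleton_left.2 (by simp [hAY.symm, hYZ₁])
    have hZ₂AZ₁ : Disjoint (Z₂ \ Z₁) ({A} ∪ Z₁) :=
      disjoint_union_right.2 ⟨disjoint_singleton_right.2 fun h => hAZ₂ h.1, disjoint_sdiff_left⟩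
    exact dsep_union_of_usep_H1 hYv (sdiff_subset.trans hZ₂v) hZ₁v hYAZ₁ hZ₂AZ₁ hYsep
  · have hA : Disjoint {A} (desc D (cn D A Y)) :=
      disjoint_singleton_left.2 (hacy.notMem_desc_cn A Y)
    have disjoint_desc_cn {Z : Set V} (hZv : Z ⊆ H1verts D A Y L N) (hZ : Disjoint Z {A, Y}) :
        Disjoint Z (desc D (cn D A Y)) :=
      (disjoint_forb_of_subset_H1verts hZv hZ).mono_right subset_union_left
    have hcn : Disjoint ({A} ∪ Z₁ \ Z₂ ∪ Z₂) (desc D (cn D A Y)) :=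
      disjoint_union_left.2 ⟨disjoint_union_left.2
        ⟨hA, (disjoint_desc_cn hZ₁v hZ₁).mono_left sdiff_subset⟩, disjoint_desc_cn hZ₂v hZ₂⟩
    exact dsep_of_usep_H1 hAv (sdiff_subset.trans hZ₁v) hZ₂v (disjoint_singleton_left.2 hAZ₂)
      disjoint_sdiff_left hcn hAsep

/-- Proposition 5 (statement 9): if `Z₁, Z₂ ⊆ V(H¹)` satisfy the graphical
adjustment criterion and `Z₁ ⊴_{H¹} Z₂`, then `Y ⊥⊥_G Z₂ \ Z₁ | {A} ∪ Z₁` and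
`A ⊥⊥_G Z₁ \ Z₂ | Z₂`. -/
theorem stmt9 {V : Type*} [Fintype V] [DecidableEq V]
    (D : V → V → Prop) (hacy : Acyclic D)
    (A Y : V) (L N : Set V)
    (hAY : A ≠ Y) (hAancY : Relation.ReflTransGen D A Y)
    (hLnd : L ∩ desc D {A} = ∅) (hLY : Y ∉ L)
    (hN : {A, Y} ∪ L ⊆ N)
    (Z₁ Z₂ : Set V)
    (hZ₁ : GAC D A Y L N Z₁) (hZ₂ : GAC D A Y L N Z₂)
    (hZ₁v : Z₁ ⊆ H1verts D A Y L N) (hZ₂v : Z₂ ⊆ H1verts D A Y L N)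
    (hord : TLE (H1 D A Y L N) A Y Z₁ Z₂) :
    DSep D {Y} (Z₂ \ Z₁) ({A} ∪ Z₁) ∧ DSep D {A} (Z₁ \ Z₂) Z₂ := by
  exact stmt9_general hacy hAY hZ₁v hZ₂v (hZ₁.disjoint_pair hAY hAancY)
    (hZ₂.disjoint_pair hAY hAancY) hord

end CausalGraph
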